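/- For n > 2, the normalized Gauss sum σ_n(1) = (1/√(2ⁿ)) · Σ_{m=0}^{2ⁿ−1} exp(2πi m²/2ⁿ) equals 1 + i. -/

import Mathlib

/-!
Let `ζ` be a primitive root of unity of order `4 K d²`. Writing `m = x + 2 K d y` with
`x < 2 K d` and `y < 2 d` gives `m² ≡ x² + 4 K d x y` modulo `4 K d²`, so in `∑ ζ ^ m²` the sum over
`y` is geometric: it is `2 d` when `d ∣ x` and vanishes otherwise. Hence the sum of length `4 K d²`
at `ζ` is `d` times the sum of length `4 K` at `ζ ^ d²`. Powers of two from `4` on have the form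
`4 d²` or `8 d²`, which leaves the two sums `2 (1 + η)` with `η⁴ = 1` and `4 η` with `η⁴ = -1`; they
have the same normalized value at `η = i` and `η = exp (πi / 4)` because `√2 exp (πi / 4) = 1 + i`.
-/

section SumRange

variable {M : Type*} [AddCommMonoid M]

theorem sum_range_mul_eq_sum_sum (f : ℕ → M) (b c : ℕ) :
    ∑ m ∈ Finset.range (b * c), f m =
      ∑ y ∈ Finset.range c, ∑ x ∈ Finset.range b, f (x + b * y) := by
  induction c with
  | zero => simp
  | succ c ih =>
    rw [Nat.mul_succ, Finset.sum_range_add, Finset.sum_range_succ, ih]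
    simp only [add_comm]

theorem sum_range_mul_ite_dvd (f : ℕ → M) {d : ℕ} (hd : d ≠ 0) (c : ℕ) :
    ∑ m ∈ Finset.range (d * c), (if d ∣ m then f m else 0) = ∑ z ∈ Finset.range c, f (d * z) := by
  rw [sum_range_mul_eq_sum_sum]
  refine Finset.sum_congr rfl fun z _ ↦ ?_
  rw [Finset.sum_eq_single_of_mem 0 (Finset.mem_range.2 hd.pos)]
  · simp
  · intro x hx hx0
    have : ¬d ∣ x + d * z := by
      rw [Nat.dvd_add_left (dvd_mul_right d z)]
      exact Nat.not_dvd_of_pos_of_lt (Nat.pos_of_ne_zero hx0) (Finset.mem_range.1 hx)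
    rw [if_neg this]

end SumRange

/-- The quadratic Gauss sum of length `N` at `ζ`, meant for `ζ ^ N = 1`. The sum usually written
`G(a, N)` is the case `ζ = exp (2πia / N)`. -/
def quadraticGaussSum {R : Type*} [Semiring R] (ζ : R) (N : ℕ) : R :=
  ∑ m ∈ Finset.range N, ζ ^ m ^ 2

section Semiring

variable {R : Type*} [Semiring R] {ζ : R}

theorem quadraticGaussSum_four_mul_eq_two_mul_sum {K : ℕ} (hζ : ζ ^ (4 * K) = 1) :
    quadraticGaussSum ζ (4 * K) = 2 * ∑ z ∈ Finset.range (2 * K), ζ ^ z ^ 2 := by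
  have periodic (z : ℕ) : ζ ^ (2 * K + z) ^ 2 = ζ ^ z ^ 2 := by
    rw [show (2 * K + z) ^ 2 = 4 * K * (K + z) + z ^ 2 by ring, pow_add, pow_mul, hζ, one_pow,
      one_mul]
  rw [quadraticGaussSum, show 4 * K = 2 * K + 2 * K by ring, Finset.sum_range_add]
  simp only [periodic]
  exact (two_mul _).symm

theorem quadraticGaussSum_four (hζ : ζ ^ 4 = 1) : quadraticGaussSum ζ 4 = 2 * (1 + ζ) := by
  rw [quadraticGaussSum_four_mul_eq_two_mul_sum (K := 1) hζ]
  simp [Finset.sum_range_succ]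

end Semiring

theorem quadraticGaussSum_eight {R : Type*} [CommRing R] {ζ : R} (hζ : ζ ^ 4 = -1) :
    quadraticGaussSum ζ 8 = 4 * ζ := by
  have hζ8 : ζ ^ (4 * 2) = 1 := by rw [pow_mul, hζ, neg_one_sq]
  have hζ9 : ζ ^ 9 = ζ := by rw [pow_succ, hζ8, one_mul]
  rw [quadraticGaussSum_four_mul_eq_two_mul_sum (K := 2) hζ8]
  simp only [Finset.sum_range_succ, Finset.sum_range_zero, Nat.reduceMul, Nat.reducePow, hζ, hζ9]
  ring

section IsDomain

variable {R : Type*} [CommRing R] [IsDomain R] {ζ : R}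

theorem sum_range_mul_pow_mul {d : ℕ} (hζ : IsPrimitiveRoot ζ d) (c x : ℕ) :
    ∑ y ∈ Finset.range (c * d), ζ ^ (x * y) = if d ∣ x then (c * d : R) else 0 := by
  simp only [pow_mul]
  split_ifs with hx
  · simp [hζ.pow_eq_one_iff_dvd x |>.2 hx]
  · have hne : ζ ^ x - 1 ≠ 0 := sub_ne_zero.2 (mt (hζ.pow_eq_one_iff_dvd x).1 hx)
    have hone : (ζ ^ x) ^ (c * d) = 1 := by
      rw [← pow_mul, hζ.pow_eq_one_iff_dvd]
      exact dvd_mul_of_dvd_right (dvd_mul_left d c) x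
    refine (mul_eq_zero.1 ?_).resolve_right hne
    rw [geom_sum_mul, hone, sub_self]

theorem quadraticGaussSum_four_mul_mul_sq {K d : ℕ} (hζ : IsPrimitiveRoot ζ (4 * K * d ^ 2)) :
    quadraticGaussSum ζ (4 * K * d ^ 2) = d * quadraticGaussSum (ζ ^ d ^ 2) (4 * K) := by
  obtain hN | hN := eq_or_ne (4 * K * d ^ 2) 0
  · obtain rfl | rfl : K = 0 ∨ d = 0 := by simpa using hN
    · simp [quadraticGaussSum]
    · simp [quadraticGaussSum]
  have hd : d ≠ 0 := by rintro rfl; simp at hN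
  have hω : IsPrimitiveRoot (ζ ^ (4 * K * d)) d := hζ.pow hN.pos (by ring)
  have expand (x y : ℕ) :
      ζ ^ (x + 2 * K * d * y) ^ 2 = ζ ^ x ^ 2 * (ζ ^ (4 * K * d)) ^ (x * y) := by
    have h : (x + 2 * K * d * y) ^ 2 =
        x ^ 2 + 4 * K * d * (x * y) + 4 * K * d ^ 2 * (K * y ^ 2) := by ring
    rw [h, pow_add, pow_add, pow_mul ζ (4 * K * d ^ 2), hζ.pow_eq_one, one_pow, mul_one, pow_mul]
  calc quadraticGaussSum ζ (4 * K * d ^ 2)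
    _ = ∑ x ∈ Finset.range (2 * K * d), ∑ y ∈ Finset.range (2 * d),
          ζ ^ x ^ 2 * (ζ ^ (4 * K * d)) ^ (x * y) := by
      rw [quadraticGaussSum, show 4 * K * d ^ 2 = 2 * K * d * (2 * d) by ring,
        sum_range_mul_eq_sum_sum, Finset.sum_comm]
      simp only [expand]
    _ = ∑ x ∈ Finset.range (d * (2 * K)), if d ∣ x then ζ ^ x ^ 2 * (2 * (d : R)) else 0 := by
      simp only [← Finset.mul_sum, sum_range_mul_pow_mul hω, mul_ite, mul_zero,
        mul_comm d (2 * K), Nat.cast_ofNat]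
    _ = d * (2 * ∑ z ∈ Finset.range (2 * K), (ζ ^ d ^ 2) ^ z ^ 2) := by
      rw [sum_range_mul_ite_dvd _ hd, ← Finset.sum_mul]
      simp only [mul_pow, pow_mul]
      ring
    _ = d * quadraticGaussSum (ζ ^ d ^ 2) (4 * K) := by
      rw [quadraticGaussSum_four_mul_eq_two_mul_sum]
      rw [← pow_mul, mul_comm, hζ.pow_eq_one]

theorem quadraticGaussSum_four_mul_sq {d : ℕ} (hζ : IsPrimitiveRoot ζ (4 * d ^ 2)) :
    quadraticGaussSum ζ (4 * d ^ 2) = 2 * d * (1 + ζ ^ d ^ 2) := by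
  have hη : (ζ ^ d ^ 2) ^ 4 = 1 := by rw [← pow_mul, mul_comm, hζ.pow_eq_one]
  calc quadraticGaussSum ζ (4 * d ^ 2)
    _ = d * quadraticGaussSum (ζ ^ d ^ 2) 4 := quadraticGaussSum_four_mul_mul_sq (K := 1) hζ
    _ = 2 * d * (1 + ζ ^ d ^ 2) := by rw [quadraticGaussSum_four hη]; ring

theorem quadraticGaussSum_eight_mul_sq {d : ℕ} (hζ : IsPrimitiveRoot ζ (8 * d ^ 2)) :
    quadraticGaussSum ζ (8 * d ^ 2) = 4 * d * ζ ^ d ^ 2 := by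
  obtain rfl | hd := eq_or_ne d 0
  · simp [quadraticGaussSum]
  have hη : IsPrimitiveRoot (ζ ^ d ^ 2) 8 := hζ.pow (by positivity) (mul_comm _ _)
  have hη4 : (ζ ^ d ^ 2) ^ 4 = -1 :=
    (hη.pow (b := 2) (by norm_num) (by norm_num)).eq_neg_one_of_two_right
  calc quadraticGaussSum ζ (8 * d ^ 2)
    _ = d * quadraticGaussSum (ζ ^ d ^ 2) 8 := quadraticGaussSum_four_mul_mul_sq (K := 2) hζ
    _ = 4 * d * ζ ^ d ^ 2 := by rw [quadraticGaussSum_eight hη4]; ring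

end IsDomain

theorem exists_two_pow_eq_four_or_eight_mul_sq {n : ℕ} (hn : 2 ≤ n) :
    ∃ d, 2 ^ n = 4 * d ^ 2 ∨ 2 ^ n = 8 * d ^ 2 := by
  obtain ⟨k, rfl⟩ := Nat.exists_eq_add_of_le hn
  obtain ⟨j, rfl | rfl⟩ := k.even_or_odd'
  · exact ⟨2 ^ j, .inl (by ring)⟩
  · exact ⟨2 ^ j, .inr (by ring)⟩

section JacobiSym

variable {a d : ℕ}

theorem jacobiSym_four_mul_sq (h : a.Coprime (4 * d ^ 2)) :
    jacobiSym (4 * d ^ 2 : ℕ) a = 1 := by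
  have hgcd : ((2 * d : ℕ) : ℤ).gcd a = 1 := by
    rw [Int.gcd_natCast_natCast]
    refine (Nat.Coprime.coprime_dvd_right ?_ h).symm
    exact ⟨2 * d, by ring⟩
  rw [show 4 * d ^ 2 = (2 * d) ^ 2 by ring, Nat.cast_pow, jacobiSym.sq_one' hgcd]

theorem jacobiSym_eight_mul_sq (h : a.Coprime (8 * d ^ 2)) :
    jacobiSym (8 * d ^ 2 : ℕ) a = ZMod.χ₈ a := by
  have hodd : Odd a := Nat.coprime_two_right.1 (h.coprime_dvd_right ⟨4 * d ^ 2, by ring⟩)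
  have hsq : jacobiSym (4 * d ^ 2 : ℕ) a = 1 :=
    jacobiSym_four_mul_sq (h.coprime_dvd_right ⟨2, by ring⟩)
  rw [show 8 * d ^ 2 = 2 * (4 * d ^ 2) by ring, Nat.cast_mul, jacobiSym.mul_left, hsq, mul_one,
    Nat.cast_ofNat, jacobiSym.at_two hodd]

end JacobiSym

section Complex

open Complex

theorem ofReal_sqrt_two_sq : (Real.sqrt 2 : ℂ) ^ 2 = 2 := by
  exact_mod_cast Real.sq_sqrt (zero_le_two : (0 : ℝ) ≤ 2)

theorem sqrt_two_mul_exp_pi_div_four_mul_I :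
    (Real.sqrt 2 : ℂ) * exp (Real.pi / 4 * I) = 1 + I := by
  have hcast : (Real.pi / 4 : ℂ) = (Real.pi / 4 : ℝ) := by push_cast; rfl
  rw [hcast, exp_mul_I, ← ofReal_cos, ← ofReal_sin, Real.cos_pi_div_four, Real.sin_pi_div_four]
  push_cast
  linear_combination (1 + I) / 2 * ofReal_sqrt_two_sq

theorem I_pow_mul_one_add_I (j : ℕ) :
    I ^ j * (1 + I) = ZMod.χ₈ (2 * j + 1 : ℕ) * (1 + I ^ (2 * j + 1)) := by
  have hχ : ZMod.χ₈ (2 * j + 1 : ℕ) = if j % 4 = 0 ∨ j % 4 = 3 then 1 else -1 := by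
    rw [ZMod.χ₈_nat_eq_if_mod_eight, if_neg (by omega)]
    exact if_congr (by omega) rfl rfl
  have hI : I ^ (2 * j + 1) = (-1) ^ (j % 4) * I := by
    rw [pow_succ, pow_mul, I_sq, pow_eq_pow_mod j (by norm_num : (-1 : ℂ) ^ 4 = 1)]
  rw [hχ, hI, I_pow_eq_pow_mod]
  have hlt : j % 4 < 4 := Nat.mod_lt j (by norm_num)
  interval_cases j % 4
  · simp
  · norm_num
    linear_combination I_sq
  · norm_num
  · norm_num
    linear_combination -I_sq

theorem sqrt_two_mul_exp_pi_div_four_mul_I_pow {a : ℕ} (ha : Odd a) :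
    (Real.sqrt 2 : ℂ) * exp (Real.pi / 4 * I) ^ a = ZMod.χ₈ a * (1 + I ^ a) := by
  have hsq : exp (Real.pi / 4 * I) ^ 2 = I := by
    rw [← exp_nat_mul]
    refine Eq.trans ?_ exp_pi_div_two_mul_I
    congr 1
    push_cast
    ring
  obtain ⟨j, rfl⟩ := ha
  rw [← I_pow_mul_one_add_I, pow_succ, pow_mul, hsq, mul_left_comm,
    sqrt_two_mul_exp_pi_div_four_mul_I]

theorem exp_two_pi_mul_I_mul_div_pow_sq (a : ℕ) {b d : ℕ} (hd : d ≠ 0) :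
    exp (2 * Real.pi * I * (a / (b * d ^ 2 : ℕ))) ^ d ^ 2 = exp (2 * Real.pi / b * I) ^ a := by
  rw [← exp_nat_mul, ← exp_nat_mul]
  congr 1
  push_cast
  field_simp

theorem quadraticGaussSum_exp_four_mul_sq {a d : ℕ} (hd : d ≠ 0) (ha : a.Coprime (4 * d ^ 2)) :
    quadraticGaussSum (exp (2 * Real.pi * I * (a / (4 * d ^ 2 : ℕ)))) (4 * d ^ 2) =
      Real.sqrt (4 * d ^ 2 : ℕ) * (jacobiSym (4 * d ^ 2 : ℕ) a * (1 + I ^ a)) := by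
  have hζ := isPrimitiveRoot_exp_of_coprime a (4 * d ^ 2) (by positivity) ha
  have hsqrt : Real.sqrt (4 * d ^ 2 : ℕ) = 2 * d := by
    rw [show ((4 * d ^ 2 : ℕ) : ℝ) = (2 * d) ^ 2 by push_cast; ring, Real.sqrt_sq (by positivity)]
  have hangle : (2 * Real.pi / (4 : ℕ) : ℂ) = Real.pi / 2 := by push_cast; ring
  rw [quadraticGaussSum_four_mul_sq hζ, exp_two_pi_mul_I_mul_div_pow_sq a hd, hangle,
    exp_pi_div_two_mul_I, jacobiSym_four_mul_sq ha, hsqrt]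
  push_cast
  ring

theorem quadraticGaussSum_exp_eight_mul_sq {a d : ℕ} (hd : d ≠ 0) (ha : a.Coprime (8 * d ^ 2)) :
    quadraticGaussSum (exp (2 * Real.pi * I * (a / (8 * d ^ 2 : ℕ)))) (8 * d ^ 2) =
      Real.sqrt (8 * d ^ 2 : ℕ) * (jacobiSym (8 * d ^ 2 : ℕ) a * (1 + I ^ a)) := by
  have hζ := isPrimitiveRoot_exp_of_coprime a (8 * d ^ 2) (by positivity) ha
  have hodd : Odd a := Nat.coprime_two_right.1 (ha.coprime_dvd_right ⟨4 * d ^ 2, by ring⟩)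
  have hsqrt : Real.sqrt (8 * d ^ 2 : ℕ) = 2 * d * Real.sqrt 2 := by
    rw [show ((8 * d ^ 2 : ℕ) : ℝ) = (2 * d) ^ 2 * 2 by push_cast; ring,
      Real.sqrt_mul (by positivity), Real.sqrt_sq (by positivity)]
  have hangle : (2 * Real.pi / (8 : ℕ) : ℂ) = Real.pi / 4 := by push_cast; ring
  rw [quadraticGaussSum_eight_mul_sq hζ, exp_two_pi_mul_I_mul_div_pow_sq a hd, hangle,
    jacobiSym_eight_mul_sq ha, hsqrt, ← sqrt_two_mul_exp_pi_div_four_mul_I_pow hodd]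
  push_cast
  linear_combination (-2 * d * exp (Real.pi / 4 * I) ^ a) * ofReal_sqrt_two_sq

theorem sum_exp_eq_quadraticGaussSum (a N : ℕ) :
    ∑ m ∈ Finset.range N, exp (2 * Real.pi * I * a * (m : ℂ) ^ 2 / N) =
      quadraticGaussSum (exp (2 * Real.pi * I * (a / N))) N := by
  refine Finset.sum_congr rfl fun m _ ↦ ?_
  rw [← exp_nat_mul]
  congr 1
  push_cast
  ring

theorem gauss_sum_one_general (a N : ℕ) (hN0 : N ≠ 0) (haN : a.Coprime N)
    (hN : ∃ d, N = 4 * d ^ 2 ∨ N = 8 * d ^ 2) :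
    (∑ m ∈ Finset.range N, exp (2 * Real.pi * I * a * (m : ℂ) ^ 2 / N)) / Real.sqrt N =
      jacobiSym N a * (1 + I ^ a) := by
  have hsqrt : (Real.sqrt N : ℂ) ≠ 0 := by
    rw [ofReal_ne_zero, Real.sqrt_ne_zero']
    exact_mod_cast hN0.pos
  rw [sum_exp_eq_quadraticGaussSum, div_eq_iff hsqrt, mul_comm _ (Real.sqrt N : ℂ)]
  obtain ⟨d, hd⟩ := hN
  have hd0 : d ≠ 0 := by rintro rfl; simp_all
  obtain rfl | rfl := hd
  · exact quadraticGaussSum_exp_four_mul_sq hd0 haN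
  · exact quadraticGaussSum_exp_eight_mul_sq hd0 haN

end Complex

open Complex in
theorem gauss_sum_one (n : ℕ) (hn : 2 < n) :
    (∑ m ∈ Finset.range (2^n),
        Complex.exp (2 * Real.pi * I * (m : ℂ)^2 / (2^n : ℂ)))
      / Real.sqrt (2^n) = 1 + I := by
  simpa using gauss_sum_one_general 1 (2 ^ n) (by positivity) (Nat.coprime_one_left _)
    (exists_two_pow_eq_four_or_eight_mul_sq hn.le)
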